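/- Suppose the initial datum Q_init satisfies Assumption (A2) and additionally Q_init ∈ C²([0,1]) with Q_init''(1) − Q_init''(0) = K'(Φ_F)·Q_init'(1) − K'(0)·Q_init'(0). Let (Q,N) be the unique classical solution of the Q-system on its maximal existence interval [0,τ*). Then N ∈ C¹([0,τ*)) and Q ∈ C²([0,τ*)×[0,1]). -/

import Mathlib

open Real Set MeasureTheory Filter Topology
open scoped ENNReal

noncomputable section

/-- The time interval `[0, T)` in `ℝ`, where `T : ℝ≥0∞` may be `∞`. -/
def Ico0 (T : ℝ≥0∞) : Set ℝ := {τ : ℝ | 0 ≤ τ ∧ ENNReal.ofReal τ < T}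

/-- Partial derivative in the time variable (one-sided at `τ = 0`). -/
def pdTau (Q : ℝ → ℝ → ℝ) (τ η : ℝ) : ℝ := derivWithin (fun s => Q s η) (Ici 0) τ

/-- Partial derivative in the spatial variable (one-sided at `η = 0` and `η = 1`). -/
def pdEta (Q : ℝ → ℝ → ℝ) (τ η : ℝ) : ℝ := derivWithin (fun x => Q τ x) (Icc 0 1) η

/-- Assumption 1.1: `K ∈ C²(ℝ)` with `K'`, `K''` bounded on `ℝ` and `K > 0` on `[0, Φ_F]`. -/
structure KAssump (K : ℝ → ℝ) (ΦF : ℝ) : Prop where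
  smooth : ContDiff ℝ 2 K
  bdd1 : ∃ C : ℝ, ∀ x : ℝ, |deriv K x| ≤ C
  bdd2 : ∃ C : ℝ, ∀ x : ℝ, |deriv (deriv K) x| ≤ C
  pos : ∀ φ ∈ Icc (0 : ℝ) ΦF, 0 < K φ

/-- `k_min := K'(0) + ∫₀^{Φ_F} min(K''(φ), 0) dφ`. -/
def kmin (K : ℝ → ℝ) (ΦF : ℝ) : ℝ :=
  deriv K 0 + ∫ φ in (0 : ℝ)..ΦF, min (deriv (deriv K) φ) 0

/-- `k_max := K'(0) + ∫₀^{Φ_F} max(K''(φ), 0) dφ`. -/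
def kmax (K : ℝ → ℝ) (ΦF : ℝ) : ℝ :=
  deriv K 0 + ∫ φ in (0 : ℝ)..ΦF, max (deriv (deriv K) φ) 0

/-- Assumption (A2) on the initial datum. -/
structure A2 (K : ℝ → ℝ) (ΦF : ℝ) (Qinit : ℝ → ℝ) : Prop where
  reg : ContDiffOn ℝ 1 Qinit (Icc 0 1)
  mono : MonotoneOn Qinit (Icc 0 1)
  init0 : Qinit 0 = 0
  init1 : Qinit 1 = ΦF
  deriv1 : K ΦF < derivWithin Qinit (Icc 0 1) 1
  compat : derivWithin Qinit (Icc 0 1) 1 - derivWithin Qinit (Icc 0 1) 0 = K ΦF - K 0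

/-- A classical solution `(Q, N)` of the Q-system on `[0, T)` with initial datum `Qinit`. -/
structure IsQSol (K : ℝ → ℝ) (ΦF : ℝ) (T : ℝ≥0∞) (Qinit : ℝ → ℝ)
    (Q : ℝ → ℝ → ℝ) (N : ℝ → ℝ) : Prop where
  initReg : ContDiffOn ℝ 1 Qinit (Icc 0 1)
  initMono : MonotoneOn Qinit (Icc 0 1)
  init0 : Qinit 0 = 0
  init1 : Qinit 1 = ΦF
  initDeriv : K ΦF < derivWithin Qinit (Icc 0 1) 1
  reg : ContDiffOn ℝ 1 (Function.uncurry Q) (Ico0 T ×ˢ Icc (0 : ℝ) 1)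
  mono : ∀ τ ∈ Ico0 T, MonotoneOn (Q τ) (Icc 0 1)
  Ncont : ContinuousOn N (Ico0 T)
  Npos : ∀ τ ∈ Ico0 T, 0 < N τ
  pde : ∀ τ ∈ Ico0 T, ∀ η ∈ Ioo (0 : ℝ) 1,
    pdTau Q τ η + pdEta Q τ η = 1 / N τ + K (Q τ η)
  bc : ∀ τ ∈ Ico0 T, Q τ 0 = 0
  Ndef : ∀ τ ∈ Ico0 T, 1 / N τ = pdEta Q τ 1 - K ΦF
  init : ∀ η ∈ Icc (0 : ℝ) 1, Q 0 η = Qinit η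
  constraint : ∀ τ ∈ Ico0 T, K ΦF < pdEta Q τ 1

/-- A classical solution `(Q, Ñ)` of the relaxed system on `[0, T)` with initial datum `Qinit`,
where `Ñ` is unconstrained in sign. -/
structure IsRelaxedSol (K : ℝ → ℝ) (ΦF : ℝ) (T : ℝ≥0∞) (Qinit : ℝ → ℝ)
    (Q : ℝ → ℝ → ℝ) (Ntil : ℝ → ℝ) : Prop where
  initReg : ContDiffOn ℝ 1 Qinit (Icc 0 1)
  init0 : Qinit 0 = 0
  init1 : Qinit 1 = ΦF
  reg : ContDiffOn ℝ 1 (Function.uncurry Q) (Ico0 T ×ˢ Icc (0 : ℝ) 1)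
  Ncont : ContinuousOn Ntil (Ico0 T)
  pde : ∀ τ ∈ Ico0 T, ∀ η ∈ Ioo (0 : ℝ) 1,
    pdTau Q τ η + pdEta Q τ η = Ntil τ + K (Q τ η)
  bc : ∀ τ ∈ Ico0 T, Q τ 0 = 0
  Ndef : ∀ τ ∈ Ico0 T, Ntil τ = pdEta Q τ 1 - K ΦF
  init : ∀ η ∈ Icc (0 : ℝ) 1, Q 0 η = Qinit η

/-- A steady state `(Q*, N*)` of the Q-system. -/
def IsSteadyState (K : ℝ → ℝ) (ΦF : ℝ) (Qs : ℝ → ℝ) (Ns : ℝ) : Prop :=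
  ContDiffOn ℝ 1 Qs (Icc 0 1) ∧ 0 < Ns ∧
    (∀ η ∈ Icc (0 : ℝ) 1, derivWithin Qs (Icc 0 1) η = K (Qs η) + 1 / Ns) ∧
    Qs 0 = 0 ∧ Qs 1 = ΦF

/-- `P₀ f := f - ∫₀¹ f`. -/
def P0 (f : ℝ → ℝ) (η : ℝ) : ℝ := f η - ∫ x in (0 : ℝ)..1, f x

/-- `H_init := Q_init' - K ∘ Q_init` (derivative within `[0,1]`). -/
def Hinit (K : ℝ → ℝ) (Qinit : ℝ → ℝ) (η : ℝ) : ℝ :=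
  derivWithin Qinit (Icc 0 1) η - K (Qinit η)

/-!
Write `P = ∂_η Q`. Differentiating the equation in `η` along the characteristics `τ - η = σ` gives
the linear equation `∂_τ P + ∂_η P = K'(Q) P`, and evaluating the original one at `η = 0`, where
`∂_τ Q = 0`, gives the boundary condition `P(τ, 0) = P(τ, 1) + K(0) - K(Φ_F)`. With `β` the
integral of `K'(Q)` along characteristics, `P(τ, η) = G(τ - η) e^{β(τ, η)}`. Since `∂_η (K'(Q)) =
K''(Q) P` is continuous, `β` is `C¹`, so `P` is as regular as the function `G` of one variable. The
boundary condition turns into a delay equation `G(σ) = a(σ) G(σ - 1) + b(σ)` with `C¹`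
coefficients, and the initial datum gives `G` on `[-1, 0]`. Hence `G` is `C¹` as soon as its
one-sided derivatives at `0` agree, which is exactly the second-order compatibility condition.
Finally `1/N = P(·, 1) - K(Φ_F)` and `∂_τ Q = 1/N + K(Q) - P` are `C¹` too.
-/

open Function (uncurry)

section Calculus

variable {E : Type*} [NormedAddCommGroup E] [NormedSpace ℝ E]

lemma contDiff_one_uncurry_of_hasDerivAt {f f₁ f₂ : ℝ → ℝ → E}
    (hf₁ : ∀ x y, HasDerivAt (fun x => f x y) (f₁ x y) x)
    (hf₂ : ∀ x y, HasDerivAt (f x) (f₂ x y) y)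
    (cf₁ : Continuous (uncurry f₁)) (cf₂ : Continuous (uncurry f₂)) :
    ContDiff ℝ 1 (uncurry f) := by
  let D (g : ℝ → ℝ → E) (x y : ℝ) : ℝ →L[ℝ] E := ContinuousLinearMap.toSpanSingleton ℝ (g x y)
  have continuous_D {g : ℝ → ℝ → E} (hg : Continuous (uncurry g)) : Continuous (uncurry (D g)) :=
    (ContinuousLinearMap.toSpanSingletonLIE ℝ E).continuous.comp hg
  refine contDiff_one_iff_hasFDerivAt.2
    ⟨fun u => (D f₁ u.1 u.2).coprod (D f₂ u.1 u.2), ?_, fun u => ?_⟩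
  · simp only [← ContinuousLinearMap.comp_fst_add_comp_snd]
    exact ((continuous_D cf₁).clm_comp continuous_const).add
      ((continuous_D cf₂).clm_comp continuous_const)
  · exact (hasStrictFDerivAt_uncurry_coprod (f₁ := D f₁) (f₂ := D f₂)
      (.of_forall fun v => (hf₁ v.1 v.2).hasFDerivAt)
      (.of_forall fun v => (hf₂ v.1 v.2).hasFDerivAt)
      (continuous_D cf₁).continuousAt (continuous_D cf₂).continuousAt).hasFDerivAt

lemma hasDerivAt_parametric_intervalIntegral {f f' : ℝ → ℝ → E}
    (hf : ∀ x, Continuous (f x)) (hf' : Continuous (uncurry f'))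
    (hff' : ∀ x t, HasDerivAt (fun x => f x t) (f' x t) x) (a b x : ℝ) :
    HasDerivAt (fun x => ∫ t in a..b, f x t) (∫ t in a..b, f' x t) x := by
  obtain ⟨C, hC⟩ := ((isCompact_closedBall x 1).prod isCompact_uIcc).exists_bound_of_continuousOn
    (s := Metric.closedBall x 1 ×ˢ uIcc a b) hf'.continuousOn
  refine (intervalIntegral.hasDerivAt_integral_of_dominated_loc_of_deriv_le
    (bound := fun _ => C) (Metric.closedBall_mem_nhds x one_pos)
    (.of_forall fun y => (hf y).aestronglyMeasurable) ((hf x).intervalIntegrable a b)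
    (hf'.comp (.prodMk_right x)).aestronglyMeasurable
    (.of_forall fun t ht y hy => hC (y, t) ⟨hy, uIoc_subset_uIcc ht⟩)
    intervalIntegrable_const (.of_forall fun t _ y _ => hff' y t)).2

lemma contDiff_one_parametric_primitive [CompleteSpace E] {f f' : ℝ → ℝ → E}
    (hf : Continuous (uncurry f)) (hf' : Continuous (uncurry f'))
    (hff' : ∀ x t, HasDerivAt (fun x => f x t) (f' x t) x) (a : ℝ) :
    ContDiff ℝ 1 (uncurry fun x s => ∫ t in a..s, f x t) := by
  have hfx (x : ℝ) : Continuous (f x) := hf.comp (.prodMk_right x)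
  refine contDiff_one_uncurry_of_hasDerivAt
    (fun x s => hasDerivAt_parametric_intervalIntegral hfx hf' hff' a s x)
    (fun x s => (hfx x).integral_hasStrictDerivAt a s |>.hasDerivAt) ?_ hf
  exact intervalIntegral.continuous_parametric_intervalIntegral_of_continuous
    (f := fun v : ℝ × ℝ => f' v.1) (by fun_prop) continuous_snd

lemma contDiffOn_one_union_of_isClosed {f : ℝ → E} {s t : Set ℝ} (hs : IsClosed s)
    (ht : IsClosed t) (us : UniqueDiffOn ℝ s) (ut : UniqueDiffOn ℝ t)
    (hfs : ContDiffOn ℝ 1 f s) (hft : ContDiffOn ℝ 1 f t)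
    (hst : ∀ x ∈ s ∩ t, derivWithin f s x = derivWithin f t x) :
    ContDiffOn ℝ 1 f (s ∪ t) := by
  have hasDeriv_s {x : ℝ} (hx : x ∈ s) :
      HasDerivWithinAt f (derivWithin f s x) (s ∪ t) x := by
    refine (hfs.differentiableOn_one x hx).hasDerivWithinAt.union ?_
    by_cases hxt : x ∈ t
    · exact hst x ⟨hx, hxt⟩ ▸ (hft.differentiableOn_one x hxt).hasDerivWithinAt
    · exact HasFDerivWithinAt.of_notMem_closure (by rwa [ht.closure_eq])
  have hasDeriv_t {x : ℝ} (hx : x ∈ t) :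
      HasDerivWithinAt f (derivWithin f t x) (s ∪ t) x := by
    by_cases hxs : x ∈ s
    · exact hst x ⟨hxs, hx⟩ ▸ hasDeriv_s hxs
    · exact HasDerivWithinAt.union (HasFDerivWithinAt.of_notMem_closure (by rwa [hs.closure_eq]))
        (hft.differentiableOn_one x hx).hasDerivWithinAt
  have ust : UniqueDiffOn ℝ (s ∪ t) := by
    rintro x (hx | hx)
    exacts [(us x hx).mono subset_union_left, (ut x hx).mono subset_union_right]
  refine (contDiffOn_one_iff_derivWithin ust).2 ⟨?_, .union_of_isClosed ?_ ?_ hs ht⟩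
  · rintro x (hx | hx)
    exacts [(hasDeriv_s hx).differentiableWithinAt, (hasDeriv_t hx).differentiableWithinAt]
  · exact ((contDiffOn_one_iff_derivWithin us).1 hfs).2.congr fun x hx =>
      (hasDeriv_s hx).derivWithin (ust x (.inl hx))
  · exact ((contDiffOn_one_iff_derivWithin ut).1 hft).2.congr fun x hx =>
      (hasDeriv_t hx).derivWithin (ust x (.inr hx))

lemma eq_mul_exp_of_hasDerivAt {y β k : ℝ → ℝ} {a b : ℝ} (hab : a ≤ b)
    (hy : ContinuousOn y (Icc a b)) (hβ : ContinuousOn β (Icc a b))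
    (hy' : ∀ s ∈ Ioo a b, HasDerivAt y (k s * y s) s)
    (hβ' : ∀ s ∈ Ioo a b, HasDerivAt β (k s) s) :
    y b = y a * exp (β b - β a) := by
  have hderiv : ∀ s ∈ Ioo a b, HasDerivAt (fun s => y s * exp (-β s)) 0 s := fun s hs =>
    ((hy' s hs).mul (hβ' s hs).neg.exp).congr_deriv (by simp only [Pi.neg_apply]; ring)
  have hconst : y b * exp (-β b) = y a * exp (-β a) := by
    have hint := intervalIntegral.integral_eq_sub_of_hasDerivAt_of_le hab
      (hy.mul hβ.neg.rexp) hderiv intervalIntegrable_const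
    exact sub_eq_zero.1 (hint.symm.trans intervalIntegral.integral_zero)
  calc y b = y b * exp (-β b) * exp (β b) := by simp [mul_assoc, ← exp_add]
    _ = y a * exp (β b - β a) := by rw [hconst, mul_assoc, ← exp_add]; ring_nf

end Calculus

section Delay

variable {G a b : ℝ → ℝ} {r T a' b' g₀ g₁ : ℝ}

lemma hasDerivWithinAt_delay (hr : 0 < r) (ha : HasDerivWithinAt a a' (Ici 0) 0)
    (hb : HasDerivWithinAt b b' (Ici 0) 0) (hG : HasDerivWithinAt G g₁ (Icc (-r) 0) (-r)) :
    HasDerivWithinAt (fun σ => a σ * G (σ - r) + b σ) (a' * G (-r) + a 0 * g₁ + b') (Ici 0) 0 := by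
  have hshift : HasDerivWithinAt (fun σ => G (σ - r)) g₁ (Icc 0 r) 0 := by
    have hsub : HasDerivWithinAt (fun σ : ℝ => σ - r) 1 (Icc 0 r) 0 :=
      ((hasDerivAt_id 0).sub_const r).hasDerivWithinAt
    have hG' : HasDerivWithinAt G g₁ (Icc (-r) 0) (0 - r) := by rwa [zero_sub]
    have hmaps : MapsTo (fun σ : ℝ => σ - r) (Icc 0 r) (Icc (-r) 0) := fun σ hσ =>
      ⟨by linarith [hσ.1], by linarith [hσ.2]⟩
    exact (HasDerivWithinAt.comp (h := fun σ : ℝ => σ - r) 0 hG' hsub hmaps).congr_deriv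
      (mul_one g₁)
  exact ((ha.mul (hshift.mono_of_mem_nhdsWithin (Icc_mem_nhdsGE hr))).add hb).congr_deriv
    (by rw [zero_sub])

/-- Method of steps: the equation carries regularity from `[-r, t]` to `[0, t + r]`, and `hcompat`
removes the only possible kink, the one at `0`. -/
lemma contDiffOn_one_of_delay_eq (hr : 0 < r) (hT : 0 < T)
    (ha : ContDiffOn ℝ 1 a (Icc 0 T)) (hb : ContDiffOn ℝ 1 b (Icc 0 T))
    (ha₀ : HasDerivWithinAt a a' (Ici 0) 0) (hb₀ : HasDerivWithinAt b b' (Ici 0) 0)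
    (hG : ContDiffOn ℝ 1 G (Icc (-r) 0)) (hG₀ : HasDerivWithinAt G g₀ (Icc (-r) 0) 0)
    (hG₁ : HasDerivWithinAt G g₁ (Icc (-r) 0) (-r))
    (hdelay : ∀ σ ∈ Icc 0 T, G σ = a σ * G (σ - r) + b σ)
    (hcompat : g₀ = a' * G (-r) + a 0 * g₁ + b') :
    ContDiffOn ℝ 1 G (Icc (-r) T) := by
  have u₀ : UniqueDiffOn ℝ (Icc (-r) 0) := uniqueDiffOn_Icc (by linarith)
  have hstep : ∀ m : ℕ, ContDiffOn ℝ 1 G (Icc (-r) (min (m * r) T)) := by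
    intro m
    induction m with
    | zero => simpa [hT.le] using hG
    | succ m ih =>
      set t := min ((m + 1 : ℕ) * r) T
      have ht : 0 < t := lt_min (by positivity) hT
      have hsub : Icc 0 t ⊆ Icc 0 T := Icc_subset_Icc_right (min_le_right _ _)
      have hmaps : MapsTo (fun σ => σ - r) (Icc 0 t) (Icc (-r) (min (m * r) T)) := by
        intro σ hσ
        obtain ⟨h₁, h₂⟩ := le_min_iff.1 hσ.2
        push_cast at h₁
        exact ⟨by linarith [hσ.1], le_min (by linarith) (by linarith)⟩
      have hGt : ContDiffOn ℝ 1 G (Icc 0 t) :=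
        (((ha.mono hsub).mul (ih.comp (by fun_prop) hmaps)).add (hb.mono hsub)).congr
          fun σ hσ => hdelay σ (hsub hσ)
      have hGt₀ : HasDerivWithinAt G g₀ (Icc 0 t) 0 := hcompat ▸
        ((hasDerivWithinAt_delay hr ha₀ hb₀ hG₁).mono Icc_subset_Ici_self).congr
          (fun σ hσ => hdelay σ (hsub hσ)) (hdelay 0 ⟨le_rfl, hT.le⟩)
      rw [← Icc_union_Icc_eq_Icc (neg_nonpos.2 hr.le) ht.le]
      refine contDiffOn_one_union_of_isClosed isClosed_Icc isClosed_Icc u₀ (uniqueDiffOn_Icc ht)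
        hG hGt ?_
      rintro σ ⟨hσ, hσ'⟩
      obtain rfl : σ = 0 := le_antisymm hσ.2 hσ'.1
      rw [hG₀.derivWithin (u₀ 0 hσ), hGt₀.derivWithin (uniqueDiffOn_Icc ht 0 hσ')]
  obtain ⟨m, hm⟩ := exists_nat_ge (T / r)
  simpa [min_eq_right ((div_le_iff₀ hr).1 hm)] using hstep m

end Delay

section Characteristics

/-- The integral of `k` along the characteristic `u ↦ (u, x - s + u)` from time `0` to the point
`(s, x)`: the solution of `∂_s β + ∂_x β = k` that vanishes at time `0`. -/
def charIntegral (k : ℝ → ℝ → ℝ) (s x : ℝ) : ℝ := ∫ u in (0 : ℝ)..s, k u (x - s + u)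

variable {k k' : ℝ → ℝ → ℝ}

lemma charIntegral_zero (k : ℝ → ℝ → ℝ) (x : ℝ) : charIntegral k 0 x = 0 :=
  intervalIntegral.integral_same

lemma hasDerivAt_charIntegral_char (hk : Continuous (uncurry k)) (c s : ℝ) :
    HasDerivAt (fun s => charIntegral k s (c + s)) (k s (c + s)) s := by
  have hkc : Continuous fun u => k u (c + u) := by fun_prop
  simpa only [charIntegral, add_sub_cancel_right] using
    (hkc.integral_hasStrictDerivAt 0 s).hasDerivAt

lemma contDiff_charIntegral (hk : Continuous (uncurry k)) (hk' : Continuous (uncurry k'))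
    (hkk' : ∀ s x, HasDerivAt (k s) (k' s x) x) : ContDiff ℝ 1 (uncurry (charIntegral k)) := by
  have hprim := contDiff_one_parametric_primitive (f := fun c u => k u (c + u))
    (f' := fun c u => k' u (c + u)) (by fun_prop) (by fun_prop)
    (fun c u => (hkk' u (c + u)).comp_add_const c u) 0
  exact hprim.comp (by fun_prop : ContDiff ℝ 1 fun v : ℝ × ℝ => (v.2 - v.1, v.1))

lemma hasDerivAt_charIntegral_time_zero (hk : Continuous (uncurry k))
    (hk' : Continuous (uncurry k')) (hkk' : ∀ s x, HasDerivAt (k s) (k' s x) x) (x : ℝ) :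
    HasDerivAt (fun s => charIntegral k s x) (k 0 x) 0 := by
  have hD := ((contDiff_charIntegral hk hk' hkk').differentiable_one (0, x)).hasFDerivAt
  set D := fderiv ℝ (uncurry (charIntegral k)) (0, x)
  have along {v : ℝ → ℝ × ℝ} {v' : ℝ × ℝ} {t : ℝ} (hv : HasDerivAt v v' t) (hvt : v t = (0, x)) :
      HasDerivAt (fun t => charIntegral k (v t).1 (v t).2) (D v') t :=
    HasFDerivAt.comp_hasDerivAt (l := uncurry (charIntegral k)) t (by rwa [hvt]) hv
  have D_space : D (0, 1) = 0 := by
    have h := along ((hasDerivAt_const x (0 : ℝ)).prodMk (hasDerivAt_id x)) rfl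
    simp only [charIntegral_zero] at h
    exact h.unique (hasDerivAt_const x 0)
  have D_char : D (1, 1) = k 0 x := by
    have h := along ((hasDerivAt_id (0 : ℝ)).prodMk ((hasDerivAt_id (0 : ℝ)).const_add x)) (by simp)
    simpa using h.unique (hasDerivAt_charIntegral_char hk x 0)
  have D_time : D (1, 0) = k 0 x := by
    have hsub : ((1, 0) : ℝ × ℝ) = (1, 1) - (0, 1) := by simp
    rw [hsub, map_sub, D_char, D_space, sub_zero]
  exact D_time ▸ along ((hasDerivAt_id (0 : ℝ)).prodMk (hasDerivAt_const 0 x)) rfl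

/-- `u` is differentiable along the characteristics `s ↦ (s, c + s)` inside the open rectangle
`(0, T) × (0, 1)`, with derivative `g`. This is the equation `∂_s u + ∂_x u = g`, in a form that
makes sense when the partial derivatives of `u` need not exist. -/
def IsTransportSol (T : ℝ) (u g : ℝ → ℝ → ℝ) : Prop :=
  ∀ c, ∀ s ∈ Ioo 0 T, c + s ∈ Ioo (0 : ℝ) 1 →
    HasDerivAt (fun s => u s (c + s)) (g s (c + s)) s

variable {T : ℝ} {p : ℝ → ℝ → ℝ}

lemma IsTransportSol.congr_right {u g g' : ℝ → ℝ → ℝ} (h : IsTransportSol T u g)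
    (hg : ∀ s ∈ Ioo 0 T, ∀ x ∈ Ioo (0 : ℝ) 1, g s x = g' s x) : IsTransportSol T u g' :=
  fun c s hs hcs => hg s hs (c + s) hcs ▸ h c s hs hcs

/-- Differentiating in `c` the equation integrated along `s ↦ (s, c + s)` avoids the second
derivatives of `q`, which need not exist. -/
lemma IsTransportSol.spaceDeriv_eq_add_integral {q g g' : ℝ → ℝ → ℝ} (hq : IsTransportSol T q g)
    (hqp : ∀ s ∈ Ioo 0 T, ∀ x ∈ Ioo (0 : ℝ) 1, HasDerivAt (q s) (p s x) x)
    (hg : Continuous (uncurry g)) (hg' : Continuous (uncurry g'))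
    (hgg' : ∀ s x, HasDerivAt (g s) (g' s x) x) {c r t : ℝ} (hr : 0 < r) (hrt : r ≤ t)
    (htT : t < T) (hcr : 0 < c + r) (hct : c + t < 1) :
    p t (c + t) = p r (c + r) + ∫ u in r..t, g' u (c + u) := by
  have hq_int : ∀ c' ∈ Ioo (-r) (1 - t),
      ∫ u in r..t, g u (c' + u) = q t (c' + t) - q r (c' + r) := by
    intro c' hc'
    have hgc : Continuous fun u => g u (c' + u) := by fun_prop
    refine intervalIntegral.integral_eq_sub_of_hasDerivAt (f := fun u => q u (c' + u))
      (fun u hu => ?_) (hgc.intervalIntegrable r t)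
    rw [uIcc_of_le hrt] at hu
    exact hq c' u ⟨by linarith [hu.1], by linarith [hu.2]⟩
      ⟨by linarith [hu.1, hc'.1], by linarith [hu.2, hc'.2]⟩
  have hderiv_int := hasDerivAt_parametric_intervalIntegral (f := fun c u => g u (c + u))
    (f' := fun c u => g' u (c + u)) (fun c => by fun_prop) (by fun_prop)
    (fun c u => (hgg' u (c + u)).comp_add_const c u) r t c
  have hderiv_q {s : ℝ} (hrs : r ≤ s) (hst : s ≤ t) :
      HasDerivAt (fun c => q s (c + s)) (p s (c + s)) c :=
    (hqp s ⟨by linarith, by linarith⟩ (c + s) ⟨by linarith, by linarith⟩).comp_add_const c s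
  have hderiv_eq := hderiv_int.unique <|
    ((hderiv_q hrt le_rfl).sub (hderiv_q le_rfl hrt)).congr_of_eventuallyEq <| by
      filter_upwards [Ioo_mem_nhds (by linarith : -r < c) (by linarith : c < 1 - t)]
        with c' hc' using hq_int c' hc'
  rw [hderiv_eq, add_sub_cancel]

lemma IsTransportSol.spaceDeriv {q g g' : ℝ → ℝ → ℝ} (hq : IsTransportSol T q g)
    (hqp : ∀ s ∈ Ioo 0 T, ∀ x ∈ Ioo (0 : ℝ) 1, HasDerivAt (q s) (p s x) x)
    (hg : Continuous (uncurry g)) (hg' : Continuous (uncurry g'))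
    (hgg' : ∀ s x, HasDerivAt (g s) (g' s x) x) : IsTransportSol T p g' := by
  intro c s hs hcs
  obtain ⟨r, hr, hrs⟩ := exists_between (max_lt hs.1 (neg_lt_iff_pos_add'.2 hcs.1))
  obtain ⟨hr₀, hcr⟩ := max_lt_iff.1 hr
  have hg'c : Continuous fun u => g' u (c + u) := by fun_prop
  refine ((hg'c.integral_hasStrictDerivAt r s).hasDerivAt.const_add
    (p r (c + r))).congr_of_eventuallyEq ?_
  filter_upwards [Ioo_mem_nhds hrs (lt_min hs.2 (lt_sub_iff_add_lt'.2 hcs.2))] with t ht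
  obtain ⟨htT, hct⟩ := lt_min_iff.1 ht.2
  exact hq.spaceDeriv_eq_add_integral hqp hg hg' hgg' hr₀ ht.1.le htT (by linarith) (by linarith)

end Characteristics

section LinearTransport

variable {k k' p : ℝ → ℝ → ℝ} {T D : ℝ}

lemma IsTransportSol.eq_mul_exp_charIntegral (hk : Continuous (uncurry k))
    (hp : ContinuousOn (uncurry p) (Icc 0 T ×ˢ Icc 0 1))
    (hpk : IsTransportSol T p fun s x => k s x * p s x) {c s₁ s₂ : ℝ} (hs₁ : 0 ≤ s₁)
    (hs : s₁ ≤ s₂) (hs₂ : s₂ ≤ T) (hcs₁ : 0 ≤ c + s₁) (hcs₂ : c + s₂ ≤ 1) :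
    p s₂ (c + s₂) = p s₁ (c + s₁) *
      exp (charIntegral k s₂ (c + s₂) - charIntegral k s₁ (c + s₁)) := by
  have hmaps : MapsTo (fun s => (s, c + s)) (Icc s₁ s₂) (Icc 0 T ×ˢ Icc 0 1) := fun s hs =>
    ⟨⟨by linarith [hs.1], by linarith [hs.2]⟩, ⟨by linarith [hs.1], by linarith [hs.2]⟩⟩
  exact eq_mul_exp_of_hasDerivAt (y := fun s => p s (c + s)) (k := fun s => k s (c + s))
    (β := fun s => charIntegral k s (c + s)) hs (hp.comp (by fun_prop) hmaps)
    (fun s _ => (hasDerivAt_charIntegral_char hk c s).continuousAt.continuousWithinAt)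
    (fun s hs => hpk c s ⟨by linarith [hs.1], by linarith [hs.2]⟩
      ⟨by linarith [hs.1], by linarith [hs.2]⟩)
    (fun s _ => hasDerivAt_charIntegral_char hk c s)

/-- The value carried by the characteristic `s - x = σ`, i.e. the function `G` in
`p s x = G (s - x) * exp (charIntegral k s x)`. It is read off at `(max σ 0, max (-σ) 0)`, where
that characteristic enters the quadrant `s, x ≥ 0`. -/
def charProfile (k p : ℝ → ℝ → ℝ) (σ : ℝ) : ℝ :=
  p (max σ 0) (max (-σ) 0) * exp (-charIntegral k (max σ 0) (max (-σ) 0))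

lemma charProfile_of_nonpos (k p : ℝ → ℝ → ℝ) {σ : ℝ} (hσ : σ ≤ 0) :
    charProfile k p σ = p 0 (-σ) := by
  simp [charProfile, hσ, charIntegral_zero]

lemma charProfile_of_nonneg (k p : ℝ → ℝ → ℝ) {σ : ℝ} (hσ : 0 ≤ σ) :
    charProfile k p σ = p σ 0 * exp (-charIntegral k σ 0) := by
  simp [charProfile, hσ]

lemma IsTransportSol.eq_charProfile_mul_exp (hk : Continuous (uncurry k))
    (hp : ContinuousOn (uncurry p) (Icc 0 T ×ˢ Icc 0 1))
    (hpk : IsTransportSol T p fun s x => k s x * p s x) {s x : ℝ} (hs : s ∈ Icc 0 T)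
    (hx : x ∈ Icc (0 : ℝ) 1) :
    p s x = charProfile k p (s - x) * exp (charIntegral k s x) := by
  have hentry : x - s + max (s - x) 0 = max (-(s - x)) 0 := by
    rw [← max_add_add_left]; ring_nf; exact max_comm _ _
  have h := hpk.eq_mul_exp_charIntegral (c := x - s) (s₁ := max (s - x) 0) hk hp
    (le_max_right _ _) (max_le (by linarith [hx.1]) hs.1) hs.2
    (hentry ▸ le_max_right _ _) (by linarith [hx.2])
  rw [hentry, sub_add_cancel, sub_eq_neg_add (charIntegral k s x), exp_add,
    ← mul_assoc] at h
  exact h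

lemma IsTransportSol.charProfile_eq_delay (hk : Continuous (uncurry k))
    (hp : ContinuousOn (uncurry p) (Icc 0 T ×ˢ Icc 0 1))
    (hpk : IsTransportSol T p fun s x => k s x * p s x) (hbc : ∀ s ∈ Icc 0 T, p s 0 = p s 1 + D)
    {σ : ℝ} (hσ : σ ∈ Icc 0 T) :
    charProfile k p σ = exp (charIntegral k σ 1 - charIntegral k σ 0) * charProfile k p (σ - 1)
      + D * exp (-charIntegral k σ 0) := by
  rw [charProfile_of_nonneg k p hσ.1, hbc σ hσ,
    hpk.eq_charProfile_mul_exp hk hp hσ (right_mem_Icc.2 zero_le_one),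
    sub_eq_add_neg (charIntegral k σ 1), exp_add]
  ring

lemma IsTransportSol.contDiffOn_charProfile (hT : 0 < T) (hk : Continuous (uncurry k))
    (hk' : Continuous (uncurry k')) (hkk' : ∀ s x, HasDerivAt (k s) (k' s x) x)
    (hp : ContinuousOn (uncurry p) (Icc 0 T ×ˢ Icc 0 1))
    (hpk : IsTransportSol T p fun s x => k s x * p s x) (hbc : ∀ s ∈ Icc 0 T, p s 0 = p s 1 + D)
    (hp₀ : ContDiffOn ℝ 1 (p 0) (Icc 0 1))
    (hcompat : derivWithin (p 0) (Icc 0 1) 1 - derivWithin (p 0) (Icc 0 1) 0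
      = k 0 1 * p 0 1 - k 0 0 * p 0 0) :
    ContDiffOn ℝ 1 (charProfile k p) (Icc (-1) T) := by
  have hβ := contDiff_charIntegral hk hk' hkk'
  have hβ₀ := hasDerivAt_charIntegral_time_zero hk hk' hkk'
  have contDiff_β (x : ℝ) : ContDiff ℝ 1 fun σ => charIntegral k σ x :=
    hβ.comp (by fun_prop : ContDiff ℝ 1 fun σ : ℝ => (σ, x))
  have hmaps : MapsTo Neg.neg (Icc (-1 : ℝ) 0) (Icc 0 1) := fun σ hσ =>
    ⟨by linarith [hσ.2], by linarith [hσ.1]⟩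
  have hG : EqOn (charProfile k p) (fun σ => p 0 (-σ)) (Icc (-1) 0) := fun σ hσ =>
    charProfile_of_nonpos k p hσ.2
  have hasDeriv_G {σ : ℝ} (hσ : σ ∈ Icc (-1 : ℝ) 0) : HasDerivWithinAt (charProfile k p)
      (-derivWithin (p 0) (Icc 0 1) (-σ)) (Icc (-1) 0) σ :=
    (((hp₀.differentiableOn_one (-σ) (hmaps hσ)).hasDerivWithinAt.comp σ
      (hasDerivAt_neg σ).hasDerivWithinAt hmaps).congr hG (hG hσ)).congr_deriv (mul_neg_one _)
  refine contDiffOn_one_of_delay_eq one_pos hT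
    ((contDiff_β 1).sub (contDiff_β 0)).exp.contDiffOn
    (contDiff_const.mul (contDiff_β 0).neg.exp).contDiffOn
    ((hβ₀ 1).sub (hβ₀ 0)).exp.hasDerivWithinAt
    ((hβ₀ 0).neg.exp.const_mul D).hasDerivWithinAt
    ((hp₀.comp contDiff_neg.contDiffOn hmaps).congr hG)
    (hasDeriv_G ⟨by norm_num, le_rfl⟩) (hasDeriv_G ⟨le_rfl, by norm_num⟩)
    (fun σ hσ => hpk.charProfile_eq_delay hk hp hbc hσ) ?_
  have hbc₀ := hbc 0 ⟨le_rfl, hT.le⟩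
  rw [hbc₀] at hcompat
  simp only [neg_zero, Pi.sub_apply, charIntegral_zero, sub_self, exp_zero, one_mul,
    Left.neg_nonpos_iff, zero_le_one, charProfile_of_nonpos, neg_neg, mul_neg, Pi.neg_apply]
  linarith

theorem IsTransportSol.contDiffOn_one (hT : 0 < T) (hk : Continuous (uncurry k))
    (hk' : Continuous (uncurry k')) (hkk' : ∀ s x, HasDerivAt (k s) (k' s x) x)
    (hp : ContinuousOn (uncurry p) (Icc 0 T ×ˢ Icc 0 1))
    (hpk : IsTransportSol T p fun s x => k s x * p s x) (hbc : ∀ s ∈ Icc 0 T, p s 0 = p s 1 + D)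
    (hp₀ : ContDiffOn ℝ 1 (p 0) (Icc 0 1))
    (hcompat : derivWithin (p 0) (Icc 0 1) 1 - derivWithin (p 0) (Icc 0 1) 0
      = k 0 1 * p 0 1 - k 0 0 * p 0 0) :
    ContDiffOn ℝ 1 (uncurry p) (Icc 0 T ×ˢ Icc 0 1) := by
  have hmaps : MapsTo (fun v : ℝ × ℝ => v.1 - v.2) (Icc 0 T ×ˢ Icc 0 1) (Icc (-1) T) :=
    fun v hv => ⟨by linarith [hv.1.1, hv.2.2], by linarith [hv.1.2, hv.2.1]⟩
  have hG := (hpk.contDiffOn_charProfile hT hk hk' hkk' hp hbc hp₀ hcompat).comp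
    (by fun_prop) hmaps
  exact (hG.mul (contDiff_charIntegral hk hk' hkk').exp.contDiffOn).congr fun v hv =>
    hpk.eq_charProfile_mul_exp hk hp hv.1 hv.2

end LinearTransport

section Semilinear

lemma exists_continuous_eqOn_of_isClosed {X : Type*} [TopologicalSpace X] [NormalSpace X]
    {s : Set X} (hs : IsClosed s) {f : X → ℝ} (hf : ContinuousOn f s) :
    ∃ g : X → ℝ, Continuous g ∧ EqOn g f s := by
  obtain ⟨g, hg⟩ := ContinuousMap.exists_restrict_eq hs ⟨s.domRestrict f, hf.domRestrict⟩
  exact ⟨g, g.continuous, fun x hx => DFunLike.congr_fun hg ⟨x, hx⟩⟩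

lemma exists_continuous_hasDerivAt_extension {A : Set ℝ} {a b : ℝ} {q p : ℝ → ℝ → ℝ}
    (hA : IsClosed A) (hq : ContinuousOn (fun s => q s a) A)
    (hp : ContinuousOn (uncurry p) (A ×ˢ Icc a b))
    (hqp : ∀ s ∈ A, ∀ x ∈ Icc a b, HasDerivWithinAt (q s) (p s x) (Icc a b) x) :
    ∃ q' p' : ℝ → ℝ → ℝ, Continuous (uncurry q') ∧ Continuous (uncurry p') ∧
      (∀ s x, HasDerivAt (q' s) (p' s x) x) ∧
      ∀ s ∈ A, ∀ x ∈ Icc a b, q' s x = q s x ∧ p' s x = p s x := by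
  obtain ⟨q₀, hq₀, hq₀_eq⟩ := exists_continuous_eqOn_of_isClosed hA hq
  obtain ⟨p', hp', hp'_eq⟩ := exists_continuous_eqOn_of_isClosed (hA.prod isClosed_Icc) hp
  have hp's (s : ℝ) : Continuous fun y => p' (s, y) := by fun_prop
  refine ⟨fun s x => q₀ s + ∫ y in a..x, p' (s, y), fun s x => p' (s, x), ?_, hp',
    fun s x => ((hp's s).integral_hasStrictDerivAt a x).hasDerivAt.const_add (q₀ s),
    fun s hs x hx => ⟨?_, hp'_eq ⟨hs, hx⟩⟩⟩
  · exact (hq₀.comp continuous_fst).add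
      (intervalIntegral.continuous_parametric_intervalIntegral_of_continuous
        (f := fun (v : ℝ × ℝ) y => p' (v.1, y)) (by fun_prop) continuous_snd)
  · have hsub : Icc a x ⊆ Icc a b := Icc_subset_Icc_right hx.2
    have hint : ∫ y in a..x, p' (s, y) = q s x - q s a := by
      refine intervalIntegral.integral_eq_sub_of_hasDerivAt_of_le hx.1
        (fun y hy => ((hqp s hs y (hsub hy)).mono hsub).continuousWithinAt) (fun y hy => ?_)
        ((hp's s).intervalIntegrable a x)
      rw [hp'_eq ⟨hs, hsub (Ioo_subset_Icc_self hy)⟩]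
      exact (hqp s hs y (hsub (Ioo_subset_Icc_self hy))).hasDerivAt
        (Icc_mem_nhds hy.1 (hy.2.trans_le hx.2))
    change q₀ s + _ = _
    rw [hint, hq₀_eq hs]
    ring

theorem contDiffOn_one_spaceDeriv_of_semilinear {K n : ℝ → ℝ} {q p : ℝ → ℝ → ℝ} {T D : ℝ}
    (hT : 0 < T) (hK : ContDiff ℝ 2 K) (hn : ContinuousOn n (Icc 0 T))
    (hq : ContinuousOn (fun s => q s 0) (Icc 0 T))
    (hp : ContinuousOn (uncurry p) (Icc 0 T ×ˢ Icc 0 1))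
    (hqp : ∀ s ∈ Icc 0 T, ∀ x ∈ Icc (0 : ℝ) 1, HasDerivWithinAt (q s) (p s x) (Icc 0 1) x)
    (hqK : IsTransportSol T q fun s x => n s + K (q s x))
    (hbc : ∀ s ∈ Icc 0 T, p s 0 = p s 1 + D) (hp₀ : ContDiffOn ℝ 1 (p 0) (Icc 0 1))
    (hcompat : derivWithin (p 0) (Icc 0 1) 1 - derivWithin (p 0) (Icc 0 1) 0
      = deriv K (q 0 1) * p 0 1 - deriv K (q 0 0) * p 0 0) :
    ContDiffOn ℝ 1 (uncurry p) (Icc 0 T ×ˢ Icc 0 1) := by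
  obtain ⟨n', hn', hn'_eq⟩ := exists_continuous_eqOn_of_isClosed isClosed_Icc hn
  obtain ⟨q', p', hq', hp', hqp', hqp'_eq⟩ :=
    exists_continuous_hasDerivAt_extension isClosed_Icc hq hp hqp
  have hK₁ : ContDiff ℝ 1 (deriv K) := ContDiff.deriv' (n := 1) (by rwa [one_add_one_eq_two])
  have cK₁ : Continuous (deriv K) := hK₁.continuous
  have hasDeriv_K (s x : ℝ) : HasDerivAt (fun x => n' s + K (q' s x))
      (deriv K (q' s x) * p' s x) x :=
    ((hK.differentiable two_ne_zero _).hasDerivAt.comp x (hqp' s x)).const_add (n' s)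
  have hasDeriv_K₁ (s x : ℝ) : HasDerivAt (fun x => deriv K (q' s x))
      (deriv (deriv K) (q' s x) * p' s x) x :=
    (hK₁.differentiable_one _).hasDerivAt.comp x (hqp' s x)
  have hqK' : IsTransportSol T q fun s x => n' s + K (q' s x) :=
    hqK.congr_right fun s hs x hx => by
      rw [hn'_eq (Ioo_subset_Icc_self hs),
        (hqp'_eq s (Ioo_subset_Icc_self hs) x (Ioo_subset_Icc_self hx)).1]
  have hpK' : IsTransportSol T p fun s x => deriv K (q' s x) * p s x :=
    (hqK'.spaceDeriv (fun s hs x hx => (hqp s (Ioo_subset_Icc_self hs) x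
      (Ioo_subset_Icc_self hx)).hasDerivAt (Icc_mem_nhds hx.1 hx.2))
      (by fun_prop) (by fun_prop) hasDeriv_K).congr_right fun s hs x hx => by
        rw [(hqp'_eq s (Ioo_subset_Icc_self hs) x (Ioo_subset_Icc_self hx)).2]
  refine hpK'.contDiffOn_one hT (by fun_prop) (by fun_prop) hasDeriv_K₁ hp hbc hp₀ ?_
  have hq'₀ {x : ℝ} (hx : x ∈ Icc (0 : ℝ) 1) : q' 0 x = q 0 x := (hqp'_eq 0 ⟨le_rfl, hT.le⟩ x hx).1
  rwa [hq'₀ (left_mem_Icc.2 zero_le_one), hq'₀ (right_mem_Icc.2 zero_le_one)]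

end Semilinear

section Strip

variable {T : ℝ≥0∞} {Q : ℝ → ℝ → ℝ} {τ η : ℝ}

lemma isOpen_setOf_ofReal_lt (T : ℝ≥0∞) : IsOpen {τ : ℝ | ENNReal.ofReal τ < T} :=
  isOpen_lt ENNReal.continuous_ofReal continuous_const

lemma Ico0_mem_nhdsGE (hτ : τ ∈ Ico0 T) : Ico0 T ∈ 𝓝[Ici 0] τ :=
  inter_mem self_mem_nhdsWithin
    (mem_nhdsWithin_of_mem_nhds ((isOpen_setOf_ofReal_lt T).mem_nhds hτ.2))

lemma Icc_subset_Ico0 (hτ : τ ∈ Ico0 T) : Icc 0 τ ⊆ Ico0 T := fun _ hs =>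
  ⟨hs.1, (ENNReal.ofReal_le_ofReal hs.2).trans_lt hτ.2⟩

lemma exists_gt_mem_Ico0 (hτ : τ ∈ Ico0 T) : ∃ t ∈ Ico0 T, τ < t := by
  obtain ⟨t, hτt, ht⟩ := ENNReal.lt_iff_exists_nnreal_btwn.1 hτ.2
  refine ⟨t, ⟨t.2, by simpa using ht⟩, ?_⟩
  rwa [← ENNReal.ofReal_coe_nnreal, ENNReal.ofReal_lt_ofReal_iff_of_nonneg hτ.1] at hτt

lemma uniqueDiffOn_strip (T : ℝ≥0∞) : UniqueDiffOn ℝ (Ico0 T ×ˢ Icc (0 : ℝ) 1) :=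
  ((uniqueDiffOn_Ici 0).inter (isOpen_setOf_ofReal_lt T)).prod (uniqueDiffOn_Icc zero_lt_one)

lemma hasDerivWithinAt_pdEta
    (hQ : DifferentiableOn ℝ (uncurry Q) (Ico0 T ×ˢ Icc 0 1)) (hτ : τ ∈ Ico0 T)
    (hη : η ∈ Icc (0 : ℝ) 1) : HasDerivWithinAt (Q τ) (pdEta Q τ η) (Icc 0 1) η :=
  ((hQ (τ, η) ⟨hτ, hη⟩).comp (f := fun x : ℝ => (τ, x)) η (by fun_prop)
    fun _ hx => ⟨hτ, hx⟩).hasDerivWithinAt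

lemma hasDerivWithinAt_pdTau
    (hQ : DifferentiableOn ℝ (uncurry Q) (Ico0 T ×ˢ Icc 0 1)) (hτ : τ ∈ Ico0 T)
    (hη : η ∈ Icc (0 : ℝ) 1) : HasDerivWithinAt (fun s => Q s η) (pdTau Q τ η) (Ici 0) τ :=
  (((hQ (τ, η) ⟨hτ, hη⟩).comp (f := fun s : ℝ => (s, η)) τ (by fun_prop)
    fun _ hs => ⟨hs, hη⟩).mono_of_mem_nhdsWithin (Ico0_mem_nhdsGE hτ)).hasDerivWithinAt

lemma fderivWithin_strip
    (hQ : DifferentiableOn ℝ (uncurry Q) (Ico0 T ×ˢ Icc 0 1)) (hτ : τ ∈ Ico0 T)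
    (hη : η ∈ Icc (0 : ℝ) 1) :
    fderivWithin ℝ (uncurry Q) (Ico0 T ×ˢ Icc 0 1) (τ, η)
      = pdTau Q τ η • ContinuousLinearMap.fst ℝ ℝ ℝ + pdEta Q τ η • .snd ℝ ℝ ℝ := by
  have hD := (hQ (τ, η) ⟨hτ, hη⟩).hasFDerivWithinAt
  set D := fderivWithin ℝ (uncurry Q) (Ico0 T ×ˢ Icc 0 1) (τ, η)
  have D_eta : D (0, 1) = pdEta Q τ η :=
    (uniqueDiffOn_Icc zero_lt_one η hη).eq_deriv _
      (HasFDerivWithinAt.comp_hasDerivWithinAt (f := fun x : ℝ => (τ, x)) η hD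
        ((hasDerivAt_const η τ).prodMk (hasDerivAt_id η)).hasDerivWithinAt fun _ hx => ⟨hτ, hx⟩)
      (hasDerivWithinAt_pdEta hQ hτ hη)
  have D_tau : D (1, 0) = pdTau Q τ η :=
    (uniqueDiffOn_Ici 0 τ hτ.1).eq_deriv _
      ((HasFDerivWithinAt.comp_hasDerivWithinAt (f := fun s : ℝ => (s, η)) τ hD
        ((hasDerivAt_id τ).prodMk (hasDerivAt_const τ η)).hasDerivWithinAt
        fun _ hs => ⟨hs, hη⟩).mono_of_mem_nhdsWithin (Ico0_mem_nhdsGE hτ))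
      (hasDerivWithinAt_pdTau hQ hτ hη)
  ext <;> simp [D_eta, D_tau]

lemma continuousOn_pdEta (hQ : ContDiffOn ℝ 1 (uncurry Q) (Ico0 T ×ˢ Icc 0 1)) :
    ContinuousOn (uncurry (pdEta Q)) (Ico0 T ×ˢ Icc 0 1) :=
  ((hQ.continuousOn_fderivWithin (uniqueDiffOn_strip T) le_rfl).clm_apply
    (continuousOn_const (c := ((0, 1) : ℝ × ℝ)))).congr fun v hv => by
      simp [fderivWithin_strip hQ.differentiableOn_one hv.1 hv.2, uncurry]

lemma continuousOn_pdTau (hQ : ContDiffOn ℝ 1 (uncurry Q) (Ico0 T ×ˢ Icc 0 1)) :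
    ContinuousOn (uncurry (pdTau Q)) (Ico0 T ×ˢ Icc 0 1) :=
  ((hQ.continuousOn_fderivWithin (uniqueDiffOn_strip T) le_rfl).clm_apply
    (continuousOn_const (c := ((1, 0) : ℝ × ℝ)))).congr fun v hv => by
      simp [fderivWithin_strip hQ.differentiableOn_one hv.1 hv.2, uncurry]

lemma contDiffOn_two_of_pdTau_of_pdEta
    (hQ : DifferentiableOn ℝ (uncurry Q) (Ico0 T ×ˢ Icc 0 1))
    (hτ : ContDiffOn ℝ 1 (uncurry (pdTau Q)) (Ico0 T ×ˢ Icc 0 1))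
    (hη : ContDiffOn ℝ 1 (uncurry (pdEta Q)) (Ico0 T ×ˢ Icc 0 1)) :
    ContDiffOn ℝ 2 (uncurry Q) (Ico0 T ×ˢ Icc 0 1) := by
  rw [← one_add_one_eq_two, contDiffOn_succ_iff_fderivWithin (uniqueDiffOn_strip T)]
  exact ⟨hQ, by simp, ((hτ.smul contDiffOn_const).add (hη.smul contDiffOn_const)).congr
    fun v hv => fderivWithin_strip hQ hv.1 hv.2⟩

end Strip

section QSystem

variable {K : ℝ → ℝ} {ΦF : ℝ} {T : ℝ≥0∞} {Qinit : ℝ → ℝ} {Q : ℝ → ℝ → ℝ} {N Ntil : ℝ → ℝ}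
  {τ η : ℝ}

namespace IsRelaxedSol

lemma pde_Icc (h : IsRelaxedSol K ΦF T Qinit Q Ntil)
    (hK : Continuous K) (hτ : τ ∈ Ico0 T) (hη : η ∈ Icc (0 : ℝ) 1) :
    pdTau Q τ η + pdEta Q τ η = Ntil τ + K (Q τ η) := by
  have slice {f : ℝ → ℝ → ℝ} (hf : ContinuousOn (uncurry f) (Ico0 T ×ˢ Icc 0 1)) :
      ContinuousOn (f τ) (Icc 0 1) :=
    hf.comp (f := fun x : ℝ => (τ, x)) (by fun_prop) fun _ hx => ⟨hτ, hx⟩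
  have hIoo : EqOn (fun η => pdTau Q τ η + pdEta Q τ η) (fun η => Ntil τ + K (Q τ η)) (Ioo 0 1) :=
    h.pde τ hτ
  exact hIoo.of_subset_closure
    ((slice (continuousOn_pdTau h.reg)).add (slice (continuousOn_pdEta h.reg)))
    (continuousOn_const.add (hK.comp_continuousOn (slice h.reg.continuousOn)))
    Ioo_subset_Icc_self (closure_Ioo zero_ne_one).ge hη

lemma pdTau_left (h : IsRelaxedSol K ΦF T Qinit Q Ntil) (hτ : τ ∈ Ico0 T) : pdTau Q τ 0 = 0 := by
  have hQ₀ : (fun s => Q s 0) =ᶠ[𝓝[Ici 0] τ] fun _ => 0 := by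
    filter_upwards [Ico0_mem_nhdsGE hτ] with s hs using h.bc s hs
  rw [pdTau, hQ₀.derivWithin_eq (h.bc τ hτ), derivWithin_fun_const, Pi.zero_apply]

lemma pdEta_left (h : IsRelaxedSol K ΦF T Qinit Q Ntil) (hK : Continuous K) (hτ : τ ∈ Ico0 T) :
    pdEta Q τ 0 = pdEta Q τ 1 + (K 0 - K ΦF) := by
  have hpde := h.pde_Icc hK hτ (left_mem_Icc.2 zero_le_one)
  rw [h.pdTau_left hτ, h.bc τ hτ, h.Ndef τ hτ] at hpde
  linarith

lemma pdEta_init (h : IsRelaxedSol K ΦF T Qinit Q Ntil) :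
    EqOn (pdEta Q 0) (derivWithin Qinit (Icc 0 1)) (Icc 0 1) :=
  fun η hη => derivWithin_congr h.init (h.init η hη)

lemma isTransportSol (h : IsRelaxedSol K ΦF T Qinit Q Ntil) {t : ℝ} (ht : t ∈ Ico0 T) :
    IsTransportSol t Q fun s x => Ntil s + K (Q s x) := by
  intro c s hs hcs
  have hs' : s ∈ Ico0 T := Icc_subset_Ico0 ht (Ioo_subset_Icc_self hs)
  have hcs' := Ioo_subset_Icc_self hcs
  have hnhds : Ico0 T ×ˢ Icc 0 1 ∈ 𝓝 (s, c + s) :=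
    mem_of_superset (prod_mem_nhds (Icc_mem_nhds hs.1 hs.2) (Icc_mem_nhds hcs.1 hcs.2))
      (prod_mono (Icc_subset_Ico0 ht) subset_rfl)
  have hD := (h.reg.differentiableOn_one (s, c + s) ⟨hs', hcs'⟩).hasFDerivWithinAt.hasFDerivAt hnhds
  rw [fderivWithin_strip h.reg.differentiableOn_one hs' hcs'] at hD
  refine (HasFDerivAt.comp_hasDerivAt (f := fun s : ℝ => (s, c + s)) s hD
    ((hasDerivAt_id s).prodMk ((hasDerivAt_id s).const_add c))).congr_deriv ?_
  simpa using h.pde s hs' (c + s) hcs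

lemma contDiffOn_pdEta_Icc (h : IsRelaxedSol K ΦF T Qinit Q Ntil)
    (hK : ContDiff ℝ 2 K) (hreg : ContDiffOn ℝ 2 Qinit (Icc 0 1))
    (hcompat : derivWithin (derivWithin Qinit (Icc 0 1)) (Icc 0 1) 1
        - derivWithin (derivWithin Qinit (Icc 0 1)) (Icc 0 1) 0
      = deriv K ΦF * derivWithin Qinit (Icc 0 1) 1 - deriv K 0 * derivWithin Qinit (Icc 0 1) 0)
    {t : ℝ} (ht₀ : 0 < t) (ht : t ∈ Ico0 T) :
    ContDiffOn ℝ 1 (uncurry (pdEta Q)) (Icc 0 t ×ˢ Icc 0 1) := by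
  have hsub : Icc 0 t ⊆ Ico0 T := Icc_subset_Ico0 ht
  have h₀ : (0 : ℝ) ∈ Icc (0 : ℝ) 1 := left_mem_Icc.2 zero_le_one
  have h₁ : (1 : ℝ) ∈ Icc (0 : ℝ) 1 := right_mem_Icc.2 zero_le_one
  refine contDiffOn_one_spaceDeriv_of_semilinear ht₀ hK (h.Ncont.mono hsub)
    (continuousOn_const.congr fun s hs => h.bc s (hsub hs))
    ((continuousOn_pdEta h.reg).mono (prod_mono hsub subset_rfl))
    (fun s hs x hx => hasDerivWithinAt_pdEta h.reg.differentiableOn_one (hsub hs) hx)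
    (h.isTransportSol ht) (fun s hs => h.pdEta_left hK.continuous (hsub hs))
    ((hreg.derivWithin (uniqueDiffOn_Icc zero_lt_one) one_add_one_eq_two.le).congr h.pdEta_init) ?_
  rw [derivWithin_congr h.pdEta_init (h.pdEta_init h₁),
    derivWithin_congr h.pdEta_init (h.pdEta_init h₀), h.pdEta_init h₀, h.pdEta_init h₁,
    h.init 0 h₀, h.init 1 h₁, h.init0, h.init1]
  exact hcompat

lemma contDiffOn_pdEta (h : IsRelaxedSol K ΦF T Qinit Q Ntil)
    (hK : ContDiff ℝ 2 K) (hreg : ContDiffOn ℝ 2 Qinit (Icc 0 1))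
    (hcompat : derivWithin (derivWithin Qinit (Icc 0 1)) (Icc 0 1) 1
        - derivWithin (derivWithin Qinit (Icc 0 1)) (Icc 0 1) 0
      = deriv K ΦF * derivWithin Qinit (Icc 0 1) 1 - deriv K 0 * derivWithin Qinit (Icc 0 1) 0) :
    ContDiffOn ℝ 1 (uncurry (pdEta Q)) (Ico0 T ×ˢ Icc 0 1) := by
  rintro ⟨τ, η⟩ ⟨hτ, hη⟩
  obtain ⟨t, ht, hτt⟩ := exists_gt_mem_Ico0 hτ
  refine (h.contDiffOn_pdEta_Icc hK hreg hcompat (hτ.1.trans_lt hτt) ht (τ, η)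
    ⟨⟨hτ.1, hτt.le⟩, hη⟩).mono_of_mem_nhdsWithin ?_
  filter_upwards [self_mem_nhdsWithin, mem_nhdsWithin_of_mem_nhds
    ((isOpen_Iio.preimage continuous_fst).mem_nhds hτt)] with v hv hvt
  exact ⟨⟨hv.1.1, le_of_lt hvt⟩, hv.2⟩

lemma contDiffOn_Ntil (h : IsRelaxedSol K ΦF T Qinit Q Ntil)
    (hη : ContDiffOn ℝ 1 (uncurry (pdEta Q)) (Ico0 T ×ˢ Icc 0 1)) :
    ContDiffOn ℝ 1 Ntil (Ico0 T) := by
  have hη₁ : ContDiffOn ℝ 1 (fun τ => pdEta Q τ 1) (Ico0 T) :=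
    hη.comp (by fun_prop : ContDiffOn ℝ 1 (fun τ : ℝ => (τ, (1 : ℝ))) _)
      fun τ hτ => ⟨hτ, right_mem_Icc.2 zero_le_one⟩
  exact (hη₁.sub contDiffOn_const).congr h.Ndef

lemma contDiffOn_two (h : IsRelaxedSol K ΦF T Qinit Q Ntil) (hK : ContDiff ℝ 1 K)
    (hη : ContDiffOn ℝ 1 (uncurry (pdEta Q)) (Ico0 T ×ˢ Icc 0 1)) :
    ContDiffOn ℝ 2 (uncurry Q) (Ico0 T ×ˢ Icc 0 1) := by
  have hN : ContDiffOn ℝ 1 (fun v : ℝ × ℝ => Ntil v.1) (Ico0 T ×ˢ Icc 0 1) :=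
    (h.contDiffOn_Ntil hη).comp contDiffOn_fst fun v hv => hv.1
  have hτ : ContDiffOn ℝ 1 (uncurry (pdTau Q)) (Ico0 T ×ˢ Icc 0 1) :=
    ((hN.add (hK.comp_contDiffOn h.reg)).sub hη).congr fun v hv =>
      eq_sub_of_add_eq (h.pde_Icc hK.continuous hv.1 hv.2)
  exact contDiffOn_two_of_pdTau_of_pdEta h.reg.differentiableOn_one hτ hη

end IsRelaxedSol

lemma IsQSol.isRelaxedSol (h : IsQSol K ΦF T Qinit Q N) :
    IsRelaxedSol K ΦF T Qinit Q fun τ => 1 / N τ where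
  __ := h
  Ncont := continuousOn_const.div h.Ncont fun τ hτ => (h.Npos τ hτ).ne'

end QSystem

theorem stmt4_general {K : ℝ → ℝ} {ΦF : ℝ} {T : ℝ≥0∞} {Qinit : ℝ → ℝ} {Q : ℝ → ℝ → ℝ} {N : ℝ → ℝ}
    (hK : ContDiff ℝ 2 K) (hreg : ContDiffOn ℝ 2 Qinit (Icc 0 1))
    (hcompat : derivWithin (derivWithin Qinit (Icc 0 1)) (Icc 0 1) 1
        - derivWithin (derivWithin Qinit (Icc 0 1)) (Icc 0 1) 0
      = deriv K ΦF * derivWithin Qinit (Icc 0 1) 1 - deriv K 0 * derivWithin Qinit (Icc 0 1) 0)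
    (hsol : IsQSol K ΦF T Qinit Q N) :
    ContDiffOn ℝ 1 N (Ico0 T) ∧ ContDiffOn ℝ 2 (uncurry Q) (Ico0 T ×ˢ Icc 0 1) := by
  have hrel := hsol.isRelaxedSol
  have hη := hrel.contDiffOn_pdEta hK hreg hcompat
  have hN : ContDiffOn ℝ 1 (fun τ => (1 / N τ)⁻¹) (Ico0 T) :=
    (hrel.contDiffOn_Ntil hη).inv fun τ hτ => one_div_ne_zero (hsol.Npos τ hτ).ne'
  exact ⟨by simpa only [one_div, inv_inv] using hN,
    hrel.contDiffOn_two (hK.of_le one_le_two) hη⟩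

/-- Theorem 3.4: `C²` regularity of the solution under a second-order compatibility condition
on the initial datum. -/
theorem stmt4 (ΦF : ℝ) (hΦF : 0 < ΦF) (K : ℝ → ℝ) (hK : KAssump K ΦF)
    (Qinit : ℝ → ℝ) (hA2 : A2 K ΦF Qinit)
    (hreg2 : ContDiffOn ℝ 2 Qinit (Icc 0 1))
    (hcompat2 :
      derivWithin (fun η => derivWithin Qinit (Icc 0 1) η) (Icc 0 1) 1
          - derivWithin (fun η => derivWithin Qinit (Icc 0 1) η) (Icc 0 1) 0
        = deriv K ΦF * derivWithin Qinit (Icc 0 1) 1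
          - deriv K 0 * derivWithin Qinit (Icc 0 1) 0)
    (τstar : ℝ≥0∞) (Q : ℝ → ℝ → ℝ) (N : ℝ → ℝ)
    (hsol : IsQSol K ΦF τstar Qinit Q N)
    (hmax : ∀ (T : ℝ≥0∞) (Q' : ℝ → ℝ → ℝ) (N' : ℝ → ℝ),
      IsQSol K ΦF T Qinit Q' N' → T ≤ τstar) :
    ContDiffOn ℝ 1 N (Ico0 τstar) ∧
    ContDiffOn ℝ 2 (Function.uncurry Q) (Ico0 τstar ×ˢ Icc (0 : ℝ) 1) :=
  stmt4_general hK.smooth hreg2 hcompat2 hsol
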